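/- Let N ≥ 3 be an integer, b > a − 2 > −N, and let p = (N + 2 + 2b − a)/(N − 2 + a). If u is a radially symmetric positive regular solution of −div(|x|^a Du) = |x|^b u^p on ℝ^N, then there exist constants c > 0 and λ > 0 such that u(x) = c·(1 + (λ|x|)^{2+b−a})^{−(N−2+a)/(2+b−a)} for all x ∈ ℝ^N. -/

import Mathlib

open MeasureTheory Real Filter
open scoped BigOperators ENNReal NNReal RealInnerProductSpace

noncomputable section

/-- Euclidean space `ℝ^N`. -/
abbrev Euc (N : ℕ) : Type := EuclideanSpace ℝ (Fin N)

/-- Divergence of a vector field on `ℝ^N`. -/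
def vdiv {N : ℕ} (F : Euc N → Euc N) (x : Euc N) : ℝ :=
  ∑ i : Fin N, fderiv ℝ F x (EuclideanSpace.single i (1 : ℝ)) i

/-- The differential operator `-div(|x|^a ∇u)` evaluated at the point `x`. -/
def opL {N : ℕ} (a : ℝ) (u : Euc N → ℝ) (x : Euc N) : ℝ :=
  -vdiv (fun y => ‖y‖ ^ a • gradient u y) x

/-- `u` is a positive regular solution of `-div(|x|^a Du) = |x|^b u^p` on `Ω`:
`u ∈ C²(Ω \ {0}) ∩ C¹(Ω)`, `u > 0` on `Ω`, and the equation holds pointwise on `Ω \ {0}`. -/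
def IsPositiveRegularSolution {N : ℕ} (a b p : ℝ) (Ω : Set (Euc N)) (u : Euc N → ℝ) : Prop :=
  (∀ x ∈ Ω, 0 < u x) ∧
  ContDiffOn ℝ 2 u (Ω \ {0}) ∧
  ContDiffOn ℝ 1 u Ω ∧
  ∀ x ∈ Ω \ {0}, opL a u x = ‖x‖ ^ b * u x ^ p

/-- `Du` is the (componentwise) weak gradient of `u` on `Ω`. -/
def IsWeakGradientOn {N : ℕ} (Ω : Set (Euc N)) (u : Euc N → ℝ)
    (Du : Euc N → Euc N) : Prop :=
  ∀ φ : Euc N → ℝ, ContDiff ℝ 1 φ → HasCompactSupport φ → tsupport φ ⊆ Ω →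
    ∀ i : Fin N,
      ∫ x in Ω, u x * fderiv ℝ φ x (EuclideanSpace.single i (1 : ℝ))
        = -∫ x in Ω, Du x i * φ x

/-- `u` is a positive weak solution of `-div(|x|^a Du) = |x|^b u^p` on `Ω`:
`u > 0`, `u ∈ H¹_loc(Ω) ∩ L^∞_loc(Ω)` (witnessed by a weak gradient `Du` which is
locally square integrable together with `u`), and the weak formulation of the
equation holds against all `C¹` test functions compactly supported in `Ω`. -/
def IsPositiveWeakSolution {N : ℕ} (a b p : ℝ) (Ω : Set (Euc N)) (u : Euc N → ℝ) : Prop :=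
  (∀ x ∈ Ω, 0 < u x) ∧
  ∃ Du : Euc N → Euc N,
    IsWeakGradientOn Ω u Du ∧
    (∀ K : Set (Euc N), K ⊆ Ω → IsCompact K →
      IntegrableOn (fun x => u x ^ 2 + ‖Du x‖ ^ 2) K) ∧
    (∀ K : Set (Euc N), K ⊆ Ω → IsCompact K → ∃ C : ℝ, ∀ x ∈ K, u x ≤ C) ∧
    (∀ φ : Euc N → ℝ, ContDiff ℝ 1 φ → HasCompactSupport φ → tsupport φ ⊆ Ω →
      ∫ x in Ω, ‖x‖ ^ a * ⟪Du x, gradient φ x⟫ = ∫ x in Ω, ‖x‖ ^ b * u x ^ p * φ x)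

/-- `u` (with weak gradient `Du`) belongs to the weighted space `D_{a,b,q}(ℝ^N)`,
the closure of `C_c^∞(ℝ^N)` in the norm `‖u‖² = (∫|x|^b |u|^q)^{2/q} + ∫|x|^a |Du|²`. -/
def MemWeightedSobolev {N : ℕ} (a b q : ℝ) (u : Euc N → ℝ) (Du : Euc N → Euc N) : Prop :=
  Integrable (fun x : Euc N => ‖x‖ ^ b * |u x| ^ q) ∧
  Integrable (fun x : Euc N => ‖x‖ ^ a * ‖Du x‖ ^ 2) ∧
  ∃ φ : ℕ → Euc N → ℝ,
    (∀ n, ContDiff ℝ (⊤ : ℕ∞) (φ n) ∧ HasCompactSupport (φ n)) ∧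
    Tendsto (fun n => ∫ x, ‖x‖ ^ b * |φ n x - u x| ^ q) atTop (nhds 0) ∧
    Tendsto (fun n => ∫ x, ‖x‖ ^ a * ‖gradient (φ n) x - Du x‖ ^ 2) atTop (nhds 0)

/-- `u` is a finite energy solution of `-div(|x|^a Du) = |x|^b u^p` on `ℝ^N`:
a positive weak solution belonging to `D_{a,b,p+1}(ℝ^N)`. -/
def IsFiniteEnergySolution {N : ℕ} (a b p : ℝ) (u : Euc N → ℝ) : Prop :=
  (∀ x : Euc N, 0 < u x) ∧
  ∃ Du : Euc N → Euc N,
    IsWeakGradientOn Set.univ u Du ∧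
    (∀ K : Set (Euc N), IsCompact K →
      IntegrableOn (fun x => u x ^ 2 + ‖Du x‖ ^ 2) K) ∧
    (∀ K : Set (Euc N), IsCompact K → ∃ C : ℝ, ∀ x ∈ K, u x ≤ C) ∧
    (∀ φ : Euc N → ℝ, ContDiff ℝ 1 φ → HasCompactSupport φ →
      ∫ x, ‖x‖ ^ a * ⟪Du x, gradient φ x⟫ = ∫ x, ‖x‖ ^ b * u x ^ p * φ x) ∧
    MemWeightedSobolev a b (p + 1) u Du

/-- `u ∈ H²_loc(ℝ^N)`: `u` has first and second order weak derivatives that are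
locally square integrable. -/
def MemH2Loc {N : ℕ} (u : Euc N → ℝ) : Prop :=
  ∃ Du : Euc N → Euc N, ∃ D2u : Fin N → Euc N → Euc N,
    IsWeakGradientOn Set.univ u Du ∧
    (∀ i : Fin N, IsWeakGradientOn Set.univ (fun x => Du x i) (D2u i)) ∧
    ∀ K : Set (Euc N), IsCompact K →
      IntegrableOn (fun x => u x ^ 2 + ‖Du x‖ ^ 2 + ∑ i : Fin N, ‖D2u i x‖ ^ 2) K

/-!
With `m = N - 2 + a` and `q = 2 + b - a`, the profile `f` of a radial solution along a ray solves
`f'' + (m + 1) / r * f' + r ^ (q - 2) * f ^ (1 + 2 * q / m) = 0`. At this critical exponent the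
Pohozaev function `P`, multiplied by `r ^ m`, is a first integral; it vanishes at the origin, so
`P = 0`. Now view `w = f ^ (-q / m)` as a function of `s = r ^ q`: its tangent intercept
`w - s * dw/ds` has derivative proportional to `P`, hence is constant, equal to `w(0)`. Eliminating
`f'` between these two relations gives `w = w(0) + r ^ q / (m * (m + q) * w(0))`.
-/

open Set Topology

theorem eq_of_hasDerivAt_zero_of_tendsto {E : Type*} [NormedAddCommGroup E] [NormedSpace ℝ E]
    {I : Set ℝ} {F : ℝ → E} {x : ℝ} {L : E} [NeBot (𝓝[I] x)] (hIo : IsOpen I)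
    (hIc : IsPreconnected I) (hF : ∀ r ∈ I, HasDerivAt F 0 r) (hL : Tendsto F (𝓝[I] x) (𝓝 L))
    {r : ℝ} (hr : r ∈ I) : F r = L := by
  have hconst : F =ᶠ[𝓝[I] x] fun _ => F r := eventually_mem_nhdsWithin.mono fun s hs =>
    hIo.is_const_of_deriv_eq_zero hIc
      (fun t ht => (hF t ht).differentiableAt.differentiableWithinAt) (fun t ht => (hF t ht).deriv)
      hs hr
  exact tendsto_nhds_unique (tendsto_const_nhds.congr' hconst.symm) hL

section Norm

variable {F : Type*} [NormedAddCommGroup F] [InnerProductSpace ℝ F]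

theorem hasFDerivAt_norm_of_ne_zero {x : F} (hx : x ≠ 0) :
    HasFDerivAt (fun y : F => ‖y‖) (‖x‖⁻¹ • innerSL ℝ x) x := by
  have hn : ‖x‖ ≠ 0 := norm_ne_zero_iff.mpr hx
  have h := (hasStrictFDerivAt_norm_sq x).hasFDerivAt.sqrt (pow_ne_zero 2 hn)
  simp only [Real.sqrt_sq (norm_nonneg _)] at h
  refine h.congr_fderiv ?_
  ext v
  simp only [one_div, mul_inv, smul_apply, nsmul_eq_mul, smul_eq_mul]
  push_cast
  ring

theorem hasGradientAt_comp_norm [CompleteSpace F] {f : ℝ → ℝ} {f' : ℝ} {x : F} (hx : x ≠ 0)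
    (hf : HasDerivAt f f' ‖x‖) : HasGradientAt (fun y => f ‖y‖) ((f' * ‖x‖⁻¹) • x) x := by
  rw [hasGradientAt_iff_hasFDerivAt]
  refine (hf.comp_hasFDerivAt x (hasFDerivAt_norm_of_ne_zero hx)).congr_fderiv ?_
  ext v
  simp [mul_assoc]

end Norm

section Rays

variable {E G : Type*} [NormedAddCommGroup E] [NormedSpace ℝ E] [NormedAddCommGroup G]
  [NormedSpace ℝ G] {e : E} {r : ℝ}

theorem hasDerivAt_comp_smul_right {u : E → G} (hu : DifferentiableAt ℝ u (r • e)) :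
    HasDerivAt (fun s : ℝ => u (s • e)) (fderiv ℝ u (r • e) e) r := by
  have hray : HasDerivAt (fun s : ℝ => s • e) e r := by
    simpa using (hasDerivAt_id r).smul_const e
  exact hu.hasFDerivAt.comp_hasDerivAt r hray

theorem eventuallyEq_comp_norm_of_radial {β : Type*} {Ω : Set E} {u : E → β} (hΩ : IsOpen Ω)
    (hrad : ∀ x ∈ Ω, ∀ y ∈ Ω, ‖x‖ = ‖y‖ → u x = u y) (he : ‖e‖ = 1) (hr : 0 ≤ r)
    (hre : r • e ∈ Ω) : u =ᶠ[𝓝 (r • e)] fun y => u (‖y‖ • e) := by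
  have hnorm {s : ℝ} (hs : 0 ≤ s) : ‖s • e‖ = s := by
    rw [norm_smul, he, mul_one, Real.norm_of_nonneg hs]
  have hcont : ContinuousAt (fun y : E => ‖y‖ • e) (r • e) := by fun_prop
  filter_upwards [hΩ.mem_nhds hre,
    hcont.preimage_mem_nhds (hΩ.mem_nhds (by rwa [hnorm hr]))] with y hy hye
  exact hrad y hy _ hye (hnorm (norm_nonneg y)).symm

end Rays

/-- The parameters `r > 0` at which the ray `r • e` from the origin lies in `Ω`. -/
def rayParams {E : Type*} [SMul ℝ E] (Ω : Set E) (e : E) : Set ℝ :=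
  {r | 0 < r ∧ r • e ∈ Ω}

section RayParams

variable {E : Type*} [AddCommGroup E] [Module ℝ E] {Ω : Set E}

theorem isPreconnected_rayParams (hΩ : StarConvex ℝ 0 Ω) (e : E) :
    IsPreconnected (rayParams Ω e) := by
  refine OrdConnected.isPreconnected ⟨fun s hs t ht w hw => ?_⟩
  have hw0 : 0 < w := hs.1.trans_le hw.1
  have hmem : (w / t) • t • e ∈ Ω :=
    hΩ.smul_mem ht.2 (div_nonneg hw0.le ht.1.le) ((div_le_one ht.1).mpr hw.2)
  rw [smul_smul, div_mul_cancel₀ _ ht.1.ne'] at hmem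
  exact ⟨hw0, hmem⟩

variable [TopologicalSpace E] [ContinuousSMul ℝ E]

theorem isOpen_rayParams (hΩ : IsOpen Ω) (e : E) : IsOpen (rayParams Ω e) :=
  isOpen_Ioi.inter (hΩ.preimage (by fun_prop : Continuous fun s : ℝ => s • e))

theorem nhdsWithin_zero_rayParams (hΩ : Ω ∈ 𝓝 0) (e : E) : 𝓝[rayParams Ω e] (0 : ℝ) = 𝓝[>] 0 := by
  have hcont : ContinuousAt (fun s : ℝ => s • e) 0 := by fun_prop
  have hmem : (fun s : ℝ => s • e) ⁻¹' Ω ∈ 𝓝 (0 : ℝ) := hcont.preimage_mem_nhds (by simpa)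
  exact nhdsWithin_inter_of_mem' (mem_nhdsWithin_of_mem_nhds hmem)

end RayParams

section RadialOperator

variable {N : ℕ} {x : Euc N}

theorem vdiv_congr {F G : Euc N → Euc N} (h : F =ᶠ[𝓝 x] G) : vdiv F x = vdiv G x := by
  unfold vdiv
  rw [h.fderiv_eq]

theorem vdiv_smul_self {φ : Euc N → ℝ} {φ' : Euc N →L[ℝ] ℝ} (hφ : HasFDerivAt φ φ' x) :
    vdiv (fun y => φ y • y) x = N * φ x + φ' x := by
  have hx : ∑ i : Fin N, x i • EuclideanSpace.single i (1 : ℝ) = x := by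
    simpa using (EuclideanSpace.basisFun (Fin N) ℝ).sum_repr x
  have hφ'x : ∑ i : Fin N, φ' (EuclideanSpace.single i 1) * x i = φ' x := by
    conv_rhs => rw [← hx, map_sum]
    simp only [map_smul, smul_eq_mul, mul_comm]
  have hdiv : fderiv ℝ (fun y => φ y • y) x = _ := (hφ.smul (hasFDerivAt_id x)).fderiv
  rw [vdiv, hdiv, ← hφ'x]
  simp [Finset.sum_add_distrib]

theorem vdiv_radial_smul_self {g : ℝ → ℝ} {g' : ℝ} (hx : x ≠ 0) (hg : HasDerivAt g g' ‖x‖) :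
    vdiv (fun y => g ‖y‖ • y) x = N * g ‖x‖ + ‖x‖ * g' := by
  have hn : ‖x‖ ≠ 0 := norm_ne_zero_iff.mpr hx
  have hgnorm : HasFDerivAt (fun y : Euc N => g ‖y‖) (g' • (‖x‖⁻¹ • innerSL ℝ x)) x :=
    hg.comp_hasFDerivAt x (hasFDerivAt_norm_of_ne_zero hx)
  rw [vdiv_smul_self hgnorm]
  simp only [smul_apply, innerSL_apply_apply, real_inner_self_eq_norm_sq, smul_eq_mul]
  rw [sq, inv_mul_cancel_left₀ hn, mul_comm g']

theorem opL_radial {a : ℝ} {u : Euc N → ℝ} {f f' : ℝ → ℝ} {f'' : ℝ} (hx : x ≠ 0)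
    (hu : u =ᶠ[𝓝 x] fun y => f ‖y‖) (hf : ∀ᶠ r in 𝓝 ‖x‖, HasDerivAt f (f' r) r)
    (hf' : HasDerivAt f' f'' ‖x‖) :
    opL a u x = -(‖x‖ ^ a * (f'' + (N + a - 1) / ‖x‖ * f' ‖x‖)) := by
  have hn : ‖x‖ ≠ 0 := norm_ne_zero_iff.mpr hx
  have hfield : (fun y => ‖y‖ ^ a • gradient u y) =ᶠ[𝓝 x]
      fun y => (‖y‖ ^ a * (f' ‖y‖ * ‖y‖⁻¹)) • y := by
    filter_upwards [isOpen_ne.mem_nhds hx, hu.gradient, continuous_norm.continuousAt.eventually hf]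
      with y hy hgrad hfy
    rw [hgrad, (hasGradientAt_comp_norm hy hfy).gradient, smul_smul]
  have hg := ((hasDerivAt_id ‖x‖).rpow_const (p := a) (Or.inl hn)).mul
    (hf'.mul (hasDerivAt_inv hn))
  rw [opL, vdiv_congr hfield]
  refine (congrArg Neg.neg (vdiv_radial_smul_self hx hg)).trans ?_
  simp only [id, Pi.mul_apply, Real.rpow_sub_one hn]
  field_simp
  ring

end RadialOperator

/-- `f`, with derivative `f'`, is a positive solution on `I ⊆ (0, ∞)` of the Emden–Fowler equation
`f'' + (n - 1) / r * f' + r ^ σ * f ^ p = 0`, the radial form of `-div(|x|^a Du) = |x|^b u^p` when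
`n = N + a` and `σ = b - a`. -/
structure IsEmdenFowlerSolution (n σ p : ℝ) (I : Set ℝ) (f f' : ℝ → ℝ) : Prop where
  subset_Ioi : I ⊆ Ioi 0
  pos : ∀ r ∈ I, 0 < f r
  hasDerivAt : ∀ r ∈ I, HasDerivAt f (f' r) r
  hasDerivAt_deriv : ∀ r ∈ I, HasDerivAt f' (-((n - 1) / r * f' r) - r ^ σ * f r ^ p) r

/-- The Pohozaev function of `f`, with derivative `f'`, for the Emden–Fowler equation with the
critical parameters `n = m + 2`, `σ = q - 2`, `p = 1 + 2 * q / m`. -/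
def pohozaev (m q : ℝ) (f f' : ℝ → ℝ) (r : ℝ) : ℝ :=
  m * f r * (r * f' r) + (r * f' r) ^ 2 + m / (m + q) * r ^ q * f r ^ (2 + 2 * q / m)

/-- The intercept `w - s * dw/ds` of the tangent to `w = f ^ (-q / m)` as a function of `s = r ^ q`,
where `f'` is the derivative of `f`. -/
def tangentIntercept (m q : ℝ) (f f' : ℝ → ℝ) (r : ℝ) : ℝ :=
  f r ^ (-(q / m) - 1) * (f r + r * f' r / m)

/-- The scale `λ` for which `A * (1 + (λ * r) ^ q) ^ (-m / q)` solves the critical Emden–Fowler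
equation. -/
def bubbleScale (m q A : ℝ) : ℝ :=
  (A ^ (2 * q / m) / (m * (m + q))) ^ q⁻¹

section BubbleScale

variable {m q A : ℝ}

theorem bubbleScale_pos (hm : 0 < m) (hq : 0 < q) (hA : 0 < A) : 0 < bubbleScale m q A := by
  unfold bubbleScale
  positivity

theorem bubbleScale_mul_rpow (hm : 0 < m) (hq : 0 < q) (hA : 0 < A) {r : ℝ} (hr : 0 ≤ r) :
    (bubbleScale m q A * r) ^ q = A ^ (2 * q / m) / (m * (m + q)) * r ^ q := by
  rw [Real.mul_rpow (bubbleScale_pos hm hq hA).le hr, bubbleScale,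
    Real.rpow_inv_rpow (by positivity) hq.ne']

end BubbleScale

namespace IsEmdenFowlerSolution

variable {m q A r : ℝ} {I : Set ℝ} {f f' : ℝ → ℝ}

theorem hasDerivAt_rpow_mul_pohozaev
    (h : IsEmdenFowlerSolution (m + 2) (q - 2) (1 + 2 * q / m) I f f') (hm : m ≠ 0)
    (hmq : m + q ≠ 0) (hr : r ∈ I) : HasDerivAt (fun s => s ^ m * pohozaev m q f f' s) 0 r := by
  have hr0 : 0 < r := h.subset_Ioi hr
  have hf0 : 0 < f r := h.pos r hr
  have hf := h.hasDerivAt r hr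
  have hrf' := (hasDerivAt_id r).mul (h.hasDerivAt_deriv r hr)
  have hrpow (k : ℝ) := (hasDerivAt_id r).rpow_const (p := k) (Or.inl hr0.ne')
  have hfpow := hf.rpow_const (p := 2 + 2 * q / m) (Or.inl hf0.ne')
  refine ((hrpow m).mul ((((hf.const_mul m).mul hrf').add (hrf'.pow 2)).add
    (((hrpow q).const_mul (m / (m + q))).mul hfpow))).congr_deriv ?_
  simp only [id, Pi.mul_apply, Pi.pow_apply, Pi.add_apply, Real.rpow_sub hr0, Real.rpow_sub hf0,
    Real.rpow_add hf0, Real.rpow_one, Real.rpow_two]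
  field_simp
  ring

theorem hasDerivAt_tangentIntercept
    (h : IsEmdenFowlerSolution (m + 2) (q - 2) (1 + 2 * q / m) I f f') (hm : m ≠ 0)
    (hmq : m + q ≠ 0) (hr : r ∈ I) :
    HasDerivAt (tangentIntercept m q f f')
      (-((m + q) / (m ^ 2 * r) * f r ^ (-(q / m) - 2) * pohozaev m q f f' r)) r := by
  have hr0 : 0 < r := h.subset_Ioi hr
  have hf0 : 0 < f r := h.pos r hr
  have hf := h.hasDerivAt r hr
  have hrf' := (hasDerivAt_id r).mul (h.hasDerivAt_deriv r hr)
  have hfpow := hf.rpow_const (p := -(q / m) - 1) (Or.inl hf0.ne')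
  refine (hfpow.mul (hf.add (hrf'.div_const m))).congr_deriv ?_
  simp only [pohozaev, id, Pi.mul_apply, Pi.add_apply, Real.rpow_sub hr0, Real.rpow_sub hf0,
    Real.rpow_add hf0, Real.rpow_one, Real.rpow_two]
  field_simp
  ring

section LimitAtZero

variable [NeBot (𝓝[I] (0 : ℝ))]

theorem pohozaev_eq_zero (h : IsEmdenFowlerSolution (m + 2) (q - 2) (1 + 2 * q / m) I f f')
    (hIo : IsOpen I) (hIc : IsPreconnected I) (hm : 0 < m) (hq : 0 < q) (hA : A ≠ 0)
    (hf : Tendsto f (𝓝[I] 0) (𝓝 A)) (hf' : Tendsto (fun r => r * f' r) (𝓝[I] 0) (𝓝 0))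
    (hr : r ∈ I) : pohozaev m q f f' r = 0 := by
  have hrpow {k : ℝ} (hk : 0 < k) : Tendsto (fun r : ℝ => r ^ k) (𝓝[I] 0) (𝓝 0) := by
    have hid : Tendsto (fun r : ℝ => r) (𝓝[I] 0) (𝓝 0) :=
      tendsto_nhdsWithin_of_tendsto_nhds tendsto_id
    simpa only [Real.zero_rpow hk.ne'] using hid.rpow_const (p := k) (Or.inr hk.le)
  have hlim : Tendsto (fun r => r ^ m * pohozaev m q f f' r) (𝓝[I] 0) (𝓝 0) := by
    simpa only [pohozaev, zero_mul] using
      (hrpow hm).mul ((((hf.const_mul m).mul hf').add (hf'.pow 2)).add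
        (((hrpow hq).const_mul (m / (m + q))).mul
          (hf.rpow_const (p := 2 + 2 * q / m) (Or.inl hA))))
  have hmul := eq_of_hasDerivAt_zero_of_tendsto hIo hIc
    (fun s hs => h.hasDerivAt_rpow_mul_pohozaev hm.ne' (by positivity) hs) hlim hr
  exact (mul_eq_zero.mp hmul).resolve_left (Real.rpow_pos_of_pos (h.subset_Ioi hr) m).ne'

theorem tangentIntercept_eq (h : IsEmdenFowlerSolution (m + 2) (q - 2) (1 + 2 * q / m) I f f')
    (hIo : IsOpen I) (hIc : IsPreconnected I) (hm : 0 < m) (hq : 0 < q) (hA : A ≠ 0)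
    (hf : Tendsto f (𝓝[I] 0) (𝓝 A)) (hf' : Tendsto (fun r => r * f' r) (𝓝[I] 0) (𝓝 0))
    (hr : r ∈ I) : tangentIntercept m q f f' r = A ^ (-(q / m)) := by
  have hderiv : ∀ s ∈ I, HasDerivAt (tangentIntercept m q f f') 0 s := fun s hs => by
    simpa only [h.pohozaev_eq_zero hIo hIc hm hq hA hf hf' hs, mul_zero, neg_zero]
      using h.hasDerivAt_tangentIntercept hm.ne' (by positivity) hs
  refine eq_of_hasDerivAt_zero_of_tendsto (x := 0) hIo hIc hderiv ?_ hr
  have hlim := (hf.rpow_const (p := -(q / m) - 1) (Or.inl hA)).mul (hf.add (hf'.div_const m))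
  rwa [zero_div, add_zero, ← Real.rpow_add_one hA, sub_add_cancel] at hlim

theorem rpow_neg_eq (h : IsEmdenFowlerSolution (m + 2) (q - 2) (1 + 2 * q / m) I f f')
    (hIo : IsOpen I) (hIc : IsPreconnected I) (hm : 0 < m) (hq : 0 < q) (hA : 0 < A)
    (hf : Tendsto f (𝓝[I] 0) (𝓝 A)) (hf' : Tendsto (fun r => r * f' r) (𝓝[I] 0) (𝓝 0))
    (hr : r ∈ I) :
    f r ^ (-(q / m)) = A ^ (-(q / m)) * (1 + (bubbleScale m q A * r) ^ q) := by
  have hf0 : 0 < f r := h.pos r hr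
  have hP := h.pohozaev_eq_zero hIo hIc hm hq hA.ne' hf hf' hr
  have hT := h.tangentIntercept_eq hIo hIc hm hq hA.ne' hf hf' hr
  have hsq {x : ℝ} (hx : 0 < x) : x ^ (2 * q / m) = ((x ^ (-(q / m))) ^ 2)⁻¹ := by
    rw [← Real.rpow_mul_natCast hx.le, ← Real.rpow_neg hx.le]
    push_cast
    ring_nf
  rw [pohozaev, Real.rpow_add hf0, Real.rpow_two, hsq hf0] at hP
  rw [tangentIntercept, Real.rpow_sub_one hf0.ne'] at hT
  rw [bubbleScale_mul_rpow hm hq hA (h.subset_Ioi hr).le, hsq hA]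
  have hW : 0 < f r ^ (-(q / m)) := by positivity
  have hB : 0 < A ^ (-(q / m)) := by positivity
  generalize f r ^ (-(q / m)) = W at *
  generalize A ^ (-(q / m)) = B at *
  have hrf' : r * f' r = m * f r * (B / W - 1) := by
    rw [← hT]
    field_simp
    ring
  have hfactor : m * f r ^ 2 / ((m + q) * W ^ 2) * (r ^ q - m * (m + q) * B * (W - B)) = 0 := by
    rw [← hP, hrf']
    field_simp
    ring
  have hWB : r ^ q = m * (m + q) * B * (W - B) :=
    sub_eq_zero.mp ((mul_eq_zero.mp hfactor).resolve_left (by positivity))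
  rw [hWB]
  field_simp
  ring

theorem eq_bubble (h : IsEmdenFowlerSolution (m + 2) (q - 2) (1 + 2 * q / m) I f f')
    (hIo : IsOpen I) (hIc : IsPreconnected I) (hm : 0 < m) (hq : 0 < q) (hA : 0 < A)
    (hf : Tendsto f (𝓝[I] 0) (𝓝 A)) (hf' : Tendsto (fun r => r * f' r) (𝓝[I] 0) (𝓝 0))
    (hr : r ∈ I) : f r = A * (1 + (bubbleScale m q A * r) ^ q) ^ (-m / q) := by
  have hf0 : 0 < f r := h.pos r hr
  have hscale : 0 < bubbleScale m q A * r :=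
    mul_pos (bubbleScale_pos hm hq hA) (h.subset_Ioi hr)
  have hinv {x : ℝ} (hx : 0 < x) : (x ^ (-(q / m))) ^ (-m / q) = x := by
    rw [← Real.rpow_mul hx.le, show -(q / m) * (-m / q) = 1 by field_simp, Real.rpow_one]
  rw [← hinv hf0, h.rpow_neg_eq hIo hIc hm hq hA hf hf' hr,
    Real.mul_rpow (by positivity) (by positivity), hinv hA]

end LimitAtZero

end IsEmdenFowlerSolution

namespace IsPositiveRegularSolution

variable {N : ℕ} {a b p : ℝ} {Ω : Set (Euc N)} {u : Euc N → ℝ} {e : Euc N}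

theorem isEmdenFowlerSolution_ray (hu : IsPositiveRegularSolution a b p Ω u) (hΩ : IsOpen Ω)
    (hrad : ∀ x ∈ Ω, ∀ y ∈ Ω, ‖x‖ = ‖y‖ → u x = u y) (he : ‖e‖ = 1) :
    IsEmdenFowlerSolution (N + a) (b - a) p (rayParams Ω e)
      (fun r => u (r • e)) (fun r => fderiv ℝ u (r • e) e) := by
  obtain ⟨hpos, hC2, hC1, heq⟩ := hu
  have hderiv {r : ℝ} (hr : r • e ∈ Ω) :
      HasDerivAt (fun s : ℝ => u (s • e)) (fderiv ℝ u (r • e) e) r :=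
    hasDerivAt_comp_smul_right ((hC1.contDiffAt (hΩ.mem_nhds hr)).differentiableAt one_ne_zero)
  refine ⟨fun r hr => hr.1, fun r hr => hpos _ hr.2, fun r hr => hderiv hr.2, ?_⟩
  rintro r ⟨hr, hre⟩
  have hnorm : ‖r • e‖ = r := by rw [norm_smul, he, mul_one, Real.norm_of_nonneg hr.le]
  have hne : r • e ≠ 0 := norm_ne_zero_iff.mp (hnorm.trans_ne hr.ne')
  have hC2r : ContDiffAt ℝ 2 u (r • e) :=
    hC2.contDiffAt ((hΩ.sdiff isClosed_singleton).mem_nhds ⟨hre, hne⟩)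
  have hderiv2 : HasDerivAt (fun s : ℝ => fderiv ℝ u (s • e) e)
      (fderiv ℝ (fderiv ℝ u) (r • e) e e) r := by
    have hfderiv : DifferentiableAt ℝ (fderiv ℝ u) (r • e) :=
      (hC2r.fderiv_right (m := 1) (by norm_num)).differentiableAt one_ne_zero
    simpa using (hasDerivAt_comp_smul_right hfderiv).clm_apply (hasDerivAt_const r e)
  have hderiv_near : ∀ᶠ s in 𝓝 ‖r • e‖,
      HasDerivAt (fun s : ℝ => u (s • e)) (fderiv ℝ u (s • e) e) s := by
    have hcont : ContinuousAt (fun s : ℝ => s • e) r := by fun_prop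
    rw [hnorm]
    exact (hcont.eventually (hΩ.mem_nhds hre)).mono fun s hs => hderiv hs
  have hode := heq (r • e) ⟨hre, hne⟩
  rw [opL_radial hne (eventuallyEq_comp_norm_of_radial hΩ hrad he hr.le hre) hderiv_near
    (by rwa [hnorm]), hnorm] at hode
  refine hderiv2.congr_deriv ?_
  rw [Real.rpow_sub hr]
  have hra : r ^ a ≠ 0 := (Real.rpow_pos_of_pos hr a).ne'
  field_simp at hode ⊢
  linear_combination -hode

theorem eq_bubble {m q : ℝ} (hu : IsPositiveRegularSolution a b p Ω u) (hΩ : IsOpen Ω)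
    (hstar : StarConvex ℝ 0 Ω) (h0 : 0 ∈ Ω) (hrad : ∀ x ∈ Ω, ∀ y ∈ Ω, ‖x‖ = ‖y‖ → u x = u y)
    (hm : 0 < m) (hq : 0 < q) (hNa : N + a = m + 2) (hba : b - a = q - 2) (hp : p = 1 + 2 * q / m)
    {x : Euc N} (hx : x ∈ Ω) :
    u x = u 0 * (1 + (bubbleScale m q (u 0) * ‖x‖) ^ q) ^ (-m / q) := by
  obtain rfl | hx0 := eq_or_ne x 0
  · simp [Real.zero_rpow hq.ne']
  set e : Euc N := ‖x‖⁻¹ • x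
  have he : ‖e‖ = 1 := norm_smul_inv_norm (𝕜 := ℝ) hx0
  have hxe : ‖x‖ • e = x := smul_inv_smul₀ (norm_ne_zero_iff.mpr hx0) x
  have hnhds : 𝓝[rayParams Ω e] (0 : ℝ) = 𝓝[>] 0 := nhdsWithin_zero_rayParams (hΩ.mem_nhds h0) e
  have : NeBot (𝓝[rayParams Ω e] (0 : ℝ)) := by rw [hnhds]; infer_instance
  have hC1 : ContDiffAt ℝ 1 u ((0 : ℝ) • e) := hu.2.2.1.contDiffAt (hΩ.mem_nhds (by simpa))
  have hray : Tendsto (fun s : ℝ => s • e) (𝓝[rayParams Ω e] 0) (𝓝 ((0 : ℝ) • e)) :=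
    (by fun_prop : Continuous fun s : ℝ => s • e).continuousWithinAt
  have hlim : Tendsto (fun s : ℝ => u (s • e)) (𝓝[rayParams Ω e] 0) (𝓝 (u 0)) := by
    simpa only [zero_smul, Function.comp_def] using hC1.continuousAt.tendsto.comp hray
  have hlim' : Tendsto (fun s : ℝ => s * fderiv ℝ u (s • e) e) (𝓝[rayParams Ω e] 0) (𝓝 0) := by
    have hid : Tendsto (fun s : ℝ => s) (𝓝[rayParams Ω e] 0) (𝓝 0) :=
      tendsto_nhdsWithin_of_tendsto_nhds tendsto_id
    have hfderiv : ContinuousAt (fun y => fderiv ℝ u y e) ((0 : ℝ) • e) :=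
      (hC1.continuousAt_fderiv one_ne_zero).clm_apply continuousAt_const
    simpa only [zero_mul, Function.comp_def] using hid.mul (hfderiv.tendsto.comp hray)
  have hode := hu.isEmdenFowlerSolution_ray hΩ hrad he
  rw [hNa, hba, hp] at hode
  simpa only [hxe] using hode.eq_bubble (isOpen_rayParams hΩ e) (isPreconnected_rayParams hstar e)
    hm hq (hu.1 0 h0) hlim hlim' ⟨norm_pos_iff.mpr hx0, by rwa [hxe]⟩

end IsPositiveRegularSolution

theorem radial_solution_classification_general
    {N : ℕ} {a b p : ℝ} (hba : a - 2 < b) (haN : -(N : ℝ) < a - 2)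
    (hp : p = ((N : ℝ) + 2 + 2 * b - a) / ((N : ℝ) - 2 + a))
    {Ω : Set (Euc N)} (hΩ : IsOpen Ω) (hstar : StarConvex ℝ 0 Ω) (h0 : 0 ∈ Ω) {u : Euc N → ℝ}
    (hrad : ∀ x ∈ Ω, ∀ y ∈ Ω, ‖x‖ = ‖y‖ → u x = u y)
    (hu : IsPositiveRegularSolution a b p Ω u) :
    ∃ c : ℝ, 0 < c ∧ ∃ lam : ℝ, 0 < lam ∧
      ∀ x ∈ Ω,
        u x = c * (1 + (lam * ‖x‖) ^ (2 + b - a)) ^ (-((N : ℝ) - 2 + a) / (2 + b - a)) := by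
  have hm : 0 < (N : ℝ) - 2 + a := by linarith
  have hq : 0 < 2 + b - a := by linarith
  have hp' : p = 1 + 2 * (2 + b - a) / ((N : ℝ) - 2 + a) := by
    rw [hp]
    field_simp
    ring
  exact ⟨u 0, hu.1 0 h0, _, bubbleScale_pos hm hq (hu.1 0 h0), fun x hx =>
    hu.eq_bubble hΩ hstar h0 hrad hm hq (by ring) (by ring) hp' hx⟩

/-- In the critical case, every radially symmetric positive regular
solution on `ℝ^N` has the form `c (1 + (λ|x|)^{2+b-a})^{-(N-2+a)/(2+b-a)}`. -/
theorem radial_solution_classification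
    (N : ℕ) (a b p : ℝ) (hN : 3 ≤ N)
    (hba : a - 2 < b) (haN : -(N : ℝ) < a - 2)
    (hp : p = ((N : ℝ) + 2 + 2 * b - a) / ((N : ℝ) - 2 + a))
    (u : Euc N → ℝ)
    (hrad : ∀ x y : Euc N, ‖x‖ = ‖y‖ → u x = u y)
    (hu : IsPositiveRegularSolution a b p Set.univ u) :
    ∃ c : ℝ, 0 < c ∧ ∃ lam : ℝ, 0 < lam ∧
      ∀ x : Euc N,
        u x = c * (1 + (lam * ‖x‖) ^ (2 + b - a)) ^ (-((N : ℝ) - 2 + a) / (2 + b - a)) := by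
  simpa only [mem_univ, forall_const] using radial_solution_classification_general hba haN hp
    isOpen_univ (starConvex_univ 0) (mem_univ 0) (fun x _ y _ => hrad x y) hu
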